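/- Let (1/2)P = {a/2 : a ∈ P}. Then: (1) every vector a ∈ (1/2)P with ⟨a,a⟩ = 1 is contained in exactly one C_8-frame; (2) the set {a ∈ (1/2)P : ⟨a,a⟩ = 1} is the disjoint union of all C_8-frames; (3) the number of C_8-frames is |𝒞_8| = 135. -/

import Mathlib

noncomputable section

/-- `V = ℂ^8`. -/
abbrev V8 : Type := Fin 8 → ℂ

/-- The symmetric bilinear form `⟨x,y⟩ = ∑ᵢ xᵢ yᵢ` on `V`. -/
def ip (x y : V8) : ℂ := ∑ i, x i * y i

/-- `φ = (1/2, …, 1/2)`. -/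
def phi8 : V8 := fun _ => (1 : ℂ) / 2

/-- `x` has all coordinates in `ℤ`. -/
def IsIntVec (x : V8) : Prop := ∀ i, ∃ n : ℤ, x i = (n : ℂ)

/-- The `E₈` root lattice `P = {a ∈ ℤ⁸ ∪ (φ + ℤ⁸) : ⟨φ,a⟩ ∈ ℤ}`. -/
def E8lat : Set V8 :=
  {a | (IsIntVec a ∨ IsIntVec (a - phi8)) ∧ ∃ n : ℤ, ip phi8 a = (n : ℂ)}

/-- A `C_l`-frame relative to `P`: a set `A = {±a₀, …, ±a_{l-1}}` with
`⟨aᵢ,aⱼ⟩ = δᵢⱼ`, `aᵢ ± aⱼ ∈ P` for `i < j`, and `2aᵢ ∈ P`. -/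
def IsClFrame (l : ℕ) (A : Set V8) : Prop :=
  ∃ a : Fin l → V8,
    A = Set.range a ∪ Set.range (fun i => -a i) ∧
    (∀ i j, ip (a i) (a j) = if i = j then 1 else 0) ∧
    (∀ i j, i < j → a i + a j ∈ E8lat ∧ a i - a j ∈ E8lat) ∧
    (∀ i, (2 : ℂ) • a i ∈ E8lat)

/-!
Since `P` is even and positive definite, two vectors of norm `1` in `(1/2)P` that are congruent
modulo `P` are equal, opposite or orthogonal. A `C₈`-frame contains an orthonormal basis of `V`, so
it is a full congruence class of such vectors, and two frames sharing a vector coincide.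

A reflection in a root permutes the `C₈`-frames, and at most two reflections in roots of shape
`((±1/2)⁸)` carry any norm `1` vector of `(1/2)P` to some `±eᵢ`, a member of the standard frame. So
every such vector lies in a frame. Their shapes are `(±1, 0⁷)`, `((±1/2)⁴, 0⁴)` and
`(±3/4, (±1/4)⁷)`, hence there are `16 + 1120 + 1024 = 2160` of them; each frame has `16` elements.
-/

open Finset
open scoped Matrix

/-! ### Integer vectors of small norm -/

section IntegerVectors

variable {ι : Type*} [Fintype ι]

lemma even_dotProduct_self_iff (x : ι → ℤ) : Even (x ⬝ᵥ x) ↔ Even (∑ i, x i) := by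
  have h : Even (x ⬝ᵥ x - ∑ i, x i) := by
    rw [dotProduct, ← sum_sub_distrib]
    exact even_sum _ fun i _ ↦ Int.even_sub.mpr (by simp only [Int.even_mul, or_self])
  exact Int.even_sub.mp h

lemma exists_eq_single_of_sum_eq_one [DecidableEq ι] {c : ι → ℤ} (hc : ∀ i, 0 ≤ c i)
    (hsum : ∑ i, c i = 1) : ∃ i, c = Pi.single i 1 := by
  obtain ⟨i, -, hi⟩ : ∃ i ∈ univ, c i ≠ 0 :=
    exists_ne_zero_of_sum_ne_zero (by rw [hsum]; exact one_ne_zero)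
  have hsplit := add_sum_erase univ c (mem_univ i)
  have hrest : ∀ k ∈ univ.erase i, 0 ≤ c k := fun k _ ↦ hc k
  have hi_pos : 0 < c i := (hc i).lt_of_ne' hi
  have hrest_nonneg := sum_nonneg hrest
  have hrest_zero := (sum_eq_zero_iff_of_nonneg hrest).mp (by lia)
  refine ⟨i, funext fun k ↦ ?_⟩
  obtain rfl | hk := eq_or_ne k i
  · rw [Pi.single_eq_same]
    lia
  · rw [Pi.single_eq_of_ne hk]
    exact hrest_zero k (mem_erase.mpr ⟨hk, mem_univ k⟩)

lemma exists_signs_of_odd_of_dotProduct_self [DecidableEq ι] {x : ι → ℤ} (hodd : ∀ i, Odd (x i))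
    (hx : x ⬝ᵥ x = Fintype.card ι + 8) :
    ∃ (i : ι) (e : ι → ℤˣ), ∀ k, x k = e k * (1 - 4 * (Pi.single i 1 : ι → ℤ) k) := by
  have hform : ∀ k, ∃ (e : ℤˣ) (t : ℤ), x k = e * (1 - 4 * t) := by
    intro k
    obtain ⟨m, hm⟩ := hodd k
    obtain ⟨t, rfl | rfl⟩ := m.even_or_odd'
    · exact ⟨1, -t, by rw [hm, Units.val_one]; ring⟩
    · exact ⟨-1, t + 1, by rw [hm, Units.val_neg, Units.val_one]; ring⟩
  choose e t hxt using hform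
  have hsq : ∀ k, x k * x k = 1 + 8 * (t k * (2 * t k - 1)) := by
    intro k
    have he : (e k : ℤ) * e k = 1 := by rw [← Units.val_mul, Int.units_mul_self, Units.val_one]
    rw [hxt]
    linear_combination (1 - 4 * t k) ^ 2 * he
  have hsum : ∑ k, t k * (2 * t k - 1) = 1 := by
    simp only [dotProduct, hsq, sum_add_distrib, ← mul_sum, sum_const, card_univ, nsmul_eq_mul,
      mul_one] at hx
    lia
  obtain ⟨i, hi⟩ := exists_eq_single_of_sum_eq_one (fun k ↦ by
    rcases le_or_gt (t k) 0 with h | h <;> nlinarith) hsum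
  refine ⟨i, e, fun k ↦ ?_⟩
  have hk := congrFun hi k
  suffices t k = (Pi.single i 1 : ι → ℤ) k by rw [hxt, this]
  obtain rfl | hne := eq_or_ne k i
  · simp only [Pi.single_eq_same] at hk ⊢
    have : (t k - 1) * (2 * t k + 1) = 0 := by linear_combination hk
    rcases mul_eq_zero.mp this with h | h <;> lia
  · simp only [Pi.single_eq_of_ne hne] at hk ⊢
    rcases mul_eq_zero.mp hk with h | h <;> lia

lemma exists_odd_of_dotProduct_self_eq_four {u : ι → ℤ}
    (hu : u ⬝ᵥ u = 4) (hsum : 4 ∣ ∑ i, u i) : ∃ i, Odd (u i) := by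
  by_contra! h
  choose t ht using fun i ↦ (Int.not_odd_iff_even.mp (h i)).two_dvd
  obtain rfl : u = (2 : ℤ) • t := funext ht
  have htt : t ⬝ᵥ t = 1 := by
    rw [smul_dotProduct, dotProduct_smul, smul_eq_mul, smul_eq_mul] at hu
    lia
  have hodd : Odd (∑ i, t i) := by
    rw [← Int.not_even_iff_odd, ← even_dotProduct_self_iff, htt]
    decide
  simp only [Pi.smul_apply, smul_eq_mul, ← mul_sum] at hsum
  obtain ⟨k, hk⟩ := hodd
  lia

lemma exists_even_of_dotProduct_self_lt_card {u : ι → ℤ}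
    (hu : u ⬝ᵥ u < Fintype.card ι) : ∃ i, Even (u i) := by
  by_contra! h
  have hge : ∀ i, 1 ≤ u i * u i := fun i ↦
    Int.add_one_le_of_lt (mul_self_pos.mpr fun h0 ↦ h i (by rw [h0]; exact Even.zero))
  have : ∑ _i : ι, (1 : ℤ) ≤ u ⬝ᵥ u := sum_le_sum fun i _ ↦ hge i
  simp only [sum_const, card_univ, nsmul_eq_mul, mul_one] at this
  lia

lemma abs_sum_signs_mul_le_dotProduct_self (e : ι → ℤˣ) (u : ι → ℤ) :
    |∑ i, (e i : ℤ) * u i| ≤ u ⬝ᵥ u :=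
  (abs_sum_le_sum_abs _ _).trans <| sum_le_sum fun i _ ↦ by
    rw [abs_mul, Int.isUnit_iff_abs_eq.mp (e i).isUnit, one_mul, ← abs_mul_abs_self (u i)]
    have := abs_nonneg (u i)
    nlinarith

lemma sum_flipped_signs_mul [DecidableEq ι] (s : Finset ι) (v : ι → ℤ) :
    ∑ k, ((if k ∈ s then -1 else 1 : ℤˣ) : ℤ) * v k = ∑ k, v k - 2 * ∑ k ∈ s, v k := by
  have hterm : ∀ k, ((if k ∈ s then -1 else 1 : ℤˣ) : ℤ) * v k =
      v k - if k ∈ s then 2 * v k else 0 := fun k ↦ by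
    split_ifs
    · push_cast
      ring
    · rw [Units.val_one, one_mul, sub_zero]
  simp only [hterm, sum_sub_distrib, sum_ite_mem, univ_inter, mul_sum]

lemma exists_signs_four_dvd_sub_two (hcard : 4 ∣ Fintype.card ι)
    (hcard_lt : 4 < Fintype.card ι) {u : ι → ℤ} (hu : u ⬝ᵥ u = 4) :
    ∃ e : ι → ℤˣ, 4 ∣ ∑ i, (e i : ℤ) ∧ 4 ∣ ∑ i, (e i : ℤ) * u i - 2 := by
  classical
  obtain ⟨s, hs⟩ : Even (∑ i, u i) := (even_dotProduct_self_iff u).mp (hu ▸ by decide)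
  by_cases hsum : 4 ∣ ∑ i, u i
  · obtain ⟨i, hi⟩ := exists_odd_of_dotProduct_self_eq_four hu hsum
    obtain ⟨j, hj⟩ := exists_even_of_dotProduct_self_lt_card (u := u) (by lia)
    have hij : i ≠ j := fun h ↦ Int.not_even_iff_odd.mpr hi (h ▸ hj)
    refine ⟨fun k ↦ if k ∈ ({i, j} : Finset ι) then -1 else 1, ?_, ?_⟩
    · have := sum_flipped_signs_mul {i, j} (1 : ι → ℤ)
      rw [sum_pair hij] at this
      simp only [Pi.one_apply, mul_one, sum_const, card_univ, nsmul_eq_mul] at this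
      lia
    · rw [sum_flipped_signs_mul, sum_pair hij]
      obtain ⟨a, ha⟩ := hi
      obtain ⟨b, hb⟩ := hj
      lia
  · refine ⟨1, ?_, ?_⟩
    · simp only [Pi.one_apply, Units.val_one, sum_const, card_univ, nsmul_eq_mul,
        mul_one]
      lia
    · simp only [Pi.one_apply, Units.val_one, one_mul]
      lia

lemma exists_signs_sum_mul_eq_two (hcard : 4 ∣ Fintype.card ι)
    (hcard_lt : 4 < Fintype.card ι) {u : ι → ℤ} (hu : u ⬝ᵥ u = 4) :
    ∃ e : ι → ℤˣ, 4 ∣ ∑ i, (e i : ℤ) ∧ ∑ i, (e i : ℤ) * u i = 2 := by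
  obtain ⟨e, he, hmod⟩ := exists_signs_four_dvd_sub_two hcard hcard_lt hu
  have habs := abs_le.mp (hu ▸ abs_sum_signs_mul_le_dotProduct_self e u)
  obtain h | h : ∑ i, (e i : ℤ) * u i = 2 ∨ ∑ i, (e i : ℤ) * u i = -2 := by lia
  · exact ⟨e, he, h⟩
  · refine ⟨-e, ?_, ?_⟩
    · simpa only [Pi.neg_apply, Units.val_neg, sum_neg_distrib, dvd_neg] using he
    · simp only [Pi.neg_apply, Units.val_neg, neg_mul, sum_neg_distrib, h, neg_neg]

/-- The integer vectors with exactly `k` nonzero entries, all of them equal to `±c` (for `c ≠ 0`);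
these are the shapes `(±c^k, 0^(n-k))` in the usual notation for short lattice vectors. -/
def vectorsOfShape (ι : Type*) [Fintype ι] [DecidableEq ι] (k : ℕ) (c : ℤ) : Finset (ι → ℤ) :=
  {x ∈ Fintype.piFinset fun _ ↦ {0, c, -c} | #{i | x i ≠ 0} = k}

lemma mem_vectorsOfShape [DecidableEq ι] {k : ℕ} {c : ℤ} {x : ι → ℤ} :
    x ∈ vectorsOfShape ι k c ↔ (∀ i, x i = 0 ∨ x i = c ∨ x i = -c) ∧ #{i | x i ≠ 0} = k := by
  simp only [vectorsOfShape, mem_filter, Fintype.mem_piFinset, mem_insert, mem_singleton]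

lemma card_vectorsOfShape [DecidableEq ι] (k : ℕ) {c : ℤ} (hc : c ≠ 0) :
    #(vectorsOfShape ι k c) = (Fintype.card ι).choose k * 2 ^ k := by
  have hfiber : ∀ s ∈ powersetCard k univ,
      #{x ∈ vectorsOfShape ι k c | ({i | x i ≠ 0} : Finset ι) = s} = 2 ^ k := by
    intro s hs
    have hs' : #s = k := (mem_powersetCard.mp hs).2
    have hpi : {x ∈ vectorsOfShape ι k c | ({i | x i ≠ 0} : Finset ι) = s} =
        Fintype.piFinset fun i ↦ if i ∈ s then {c, -c} else {0} := by
      ext x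
      simp only [mem_filter, mem_vectorsOfShape, Fintype.mem_piFinset, Finset.ext_iff, mem_univ,
        true_and]
      constructor
      · rintro ⟨⟨hx, -⟩, hsupp⟩ i
        have := hx i
        have := hsupp i
        grind
      · intro hx
        have hsupp : ∀ i, x i ≠ 0 ↔ i ∈ s := fun i ↦ by
          have := hx i
          grind
        refine ⟨⟨fun i ↦ by have := hx i; grind, ?_⟩, hsupp⟩
        rw [← hs']
        congr 1
        ext i
        simpa using hsupp i
    have hpair : #({c, -c} : Finset ℤ) = 2 := card_pair (by lia)
    simp only [hpi, Fintype.card_piFinset, apply_ite card, hpair, card_singleton, prod_ite_mem,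
      prod_const, univ_inter, hs']
  rw [card_eq_sum_card_fiberwise (t := powersetCard k univ)
    (f := fun x ↦ ({i | x i ≠ 0} : Finset ι)), sum_congr rfl hfiber, sum_const, card_powersetCard,
    card_univ, smul_eq_mul]
  intro x hx
  exact mem_powersetCard.mpr ⟨subset_univ _, (mem_vectorsOfShape.mp hx).2⟩

lemma dotProduct_self_of_mem_vectorsOfShape [DecidableEq ι] {k : ℕ} {c : ℤ}
    {x : ι → ℤ} (hx : x ∈ vectorsOfShape ι k c) : x ⬝ᵥ x = k * c ^ 2 := by
  obtain ⟨hval, hcard⟩ := mem_vectorsOfShape.mp hx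
  have hsq : ∀ i, x i * x i = if x i ≠ 0 then c ^ 2 else 0 := by
    intro i
    rcases hval i with h | h | h <;> split_ifs <;> grind
  simp only [dotProduct, hsq, ← sum_filter, sum_const, hcard, nsmul_eq_mul]

lemma dotProduct_self_eq_four_iff [DecidableEq ι] {x : ι → ℤ} :
    x ⬝ᵥ x = 4 ↔ x ∈ vectorsOfShape ι 1 2 ∪ vectorsOfShape ι 4 1 := by
  rw [mem_union]
  refine ⟨fun hx ↦ ?_, fun h ↦ ?_⟩
  · have hle : ∀ i, x i * x i ≤ 4 := fun i ↦
      hx ▸ single_le_sum (f := fun i ↦ x i * x i) (fun i _ ↦ mul_self_nonneg (x i)) (mem_univ i)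
    have hval : ∀ i, x i = 0 ∨ |x i| = 1 ∨ |x i| = 2 := fun i ↦ by
      have : |x i| ≤ 2 := abs_le_of_sq_le_sq (by linarith [hle i, sq (x i)]) (by norm_num)
      grind
    have hsq : ∀ i, x i * x i = (if |x i| = 1 then 1 else 0) + 4 * if |x i| = 2 then 1 else 0 := by
      intro i
      rw [← abs_mul_abs_self]
      rcases hval i with h | h | h <;> simp [h]
    have hcount : (#{i | |x i| = 1} : ℤ) + 4 * #{i | |x i| = 2} = 4 := by
      simpa only [dotProduct, hsq, sum_add_distrib, ← mul_sum, sum_boole] using hx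
    obtain ⟨h1, h2⟩ | ⟨h1, h2⟩ : (#{i | |x i| = 1} = 0 ∧ #{i | |x i| = 2} = 1) ∨
        (#{i | |x i| = 1} = 4 ∧ #{i | |x i| = 2} = 0) := by lia
    · have hne : ∀ i, |x i| ≠ 1 := fun i ↦ filter_eq_empty_iff.mp (card_eq_zero.mp h1) (mem_univ i)
      refine .inl (mem_vectorsOfShape.mpr ⟨fun i ↦ by grind, h2 ▸ congrArg card ?_⟩)
      ext i
      grind
    · have hne : ∀ i, |x i| ≠ 2 := fun i ↦ filter_eq_empty_iff.mp (card_eq_zero.mp h2) (mem_univ i)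
      refine .inr (mem_vectorsOfShape.mpr ⟨fun i ↦ by grind, h1 ▸ congrArg card ?_⟩)
      ext i
      grind
  · rcases h with h | h <;> simpa using dotProduct_self_of_mem_vectorsOfShape h

lemma ncard_dotProduct_self_eq_four :
    {x : ι → ℤ | x ⬝ᵥ x = 4}.ncard = 2 * Fintype.card ι + 16 * (Fintype.card ι).choose 4 := by
  classical
  have hdisj : Disjoint (vectorsOfShape ι 1 2) (vectorsOfShape ι 4 1) :=
    disjoint_left.mpr fun x h1 h4 ↦ by
      have := (mem_vectorsOfShape.mp h1).2.symm.trans (mem_vectorsOfShape.mp h4).2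
      norm_num at this
  have hset : {x : ι → ℤ | x ⬝ᵥ x = 4} = ↑(vectorsOfShape ι 1 2 ∪ vectorsOfShape ι 4 1) :=
    Set.ext fun _ ↦ dotProduct_self_eq_four_iff
  rw [hset, Set.ncard_coe_finset, card_union_of_disjoint hdisj, card_vectorsOfShape 1 two_ne_zero,
    card_vectorsOfShape 4 one_ne_zero, Nat.choose_one_right]
  ring

end IntegerVectors

lemma eq_zero_of_forall_dotProduct_orthonormal_eq_zero {ι R : Type*} [Fintype ι] [DecidableEq ι]
    [CommRing R] {a : ι → ι → R} (ha : ∀ i j, a i ⬝ᵥ a j = if i = j then 1 else 0) {v : ι → R}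
    (hv : ∀ i, a i ⬝ᵥ v = 0) : v = 0 := by
  have hmul : Matrix.of a * (Matrix.of a)ᵀ = 1 := by
    ext i j
    rw [Matrix.one_apply, ← ha]
    rfl
  have hmulVec : Matrix.of a *ᵥ v = 0 := funext hv
  rw [← Matrix.one_mulVec v, ← mul_eq_one_comm.mp hmul, ← Matrix.mulVec_mulVec, hmulVec,
    Matrix.mulVec_zero]

lemma ncard_sUnion_of_forall_ncard_eq {α : Type*} {F : Set (Set α)} {k : ℕ}
    (hF : ∀ A ∈ F, A.ncard = k) (hdisj : F.Pairwise Disjoint) (hfin : (⋃₀ F).Finite) :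
    (⋃₀ F).ncard = k * F.ncard := by
  have hFfin : F.Finite := hfin.finite_subsets.subset fun A hA ↦ Set.subset_sUnion_of_mem hA
  rw [Set.sUnion_eq_biUnion, hFfin.ncard_biUnion
    (fun A hA ↦ hfin.subset (Set.subset_sUnion_of_mem hA)) hdisj, finsum_mem_congr rfl hF,
    finsum_mem_eq_finite_toFinset_sum _ hFfin, sum_const, smul_eq_mul, mul_comm,
    Set.ncard_eq_toFinset_card F hFfin]

/-! ### The `E₈` lattice -/

lemma ip_eq_dotProduct (x y : V8) : ip x y = x ⬝ᵥ y := rfl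

lemma ip_add_self (x y : V8) : ip (x + y) (x + y) = ip x x + 2 * ip x y + ip y y := by
  simp only [ip_eq_dotProduct, add_dotProduct, dotProduct_add, dotProduct_comm y x]
  ring

lemma ip_sub_self (x y : V8) : ip (x - y) (x - y) = ip x x - 2 * ip x y + ip y y := by
  simp only [ip_eq_dotProduct, sub_dotProduct, dotProduct_sub, dotProduct_comm y x]
  ring

lemma ip_self_of_forall_eq_div {x : V8} {w : Fin 8 → ℤ} {c : ℂ} (hx : ∀ i, x i = w i / c) :
    ip x x = ((w ⬝ᵥ w : ℤ) : ℂ) / c ^ 2 := by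
  simp only [ip, hx, dotProduct, Int.cast_sum, Int.cast_mul, sum_div, div_mul_div_comm, sq]

lemma ip_phi8_eq_of_forall_eq_add {x : V8} {n : Fin 8 → ℤ} {m : ℤ}
    (hx : ∀ i, x i = n i + m / 2) : ip phi8 x = ((∑ i, n i : ℤ) : ℂ) / 2 + 2 * m := by
  simp only [ip, phi8, hx, ← mul_sum, sum_add_distrib, sum_const, card_univ, Fintype.card_fin,
    nsmul_eq_mul, Int.cast_sum]
  push_cast
  ring

-- The decomposition `E₈ = D₈ + ℤφ`, which treats integral and half-integral vectors uniformly.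
lemma mem_E8lat_iff {x : V8} :
    x ∈ E8lat ↔ ∃ (n : Fin 8 → ℤ) (m : ℤ), Even (∑ i, n i) ∧ ∀ i, x i = n i + m / 2 := by
  constructor
  · rintro ⟨hx, k, hk⟩
    obtain ⟨n, m, hnm⟩ : ∃ (n : Fin 8 → ℤ) (m : ℤ), ∀ i, x i = n i + m / 2 := by
      rcases hx with h | h <;> choose n hn using h
      · exact ⟨n, 0, fun i ↦ by rw [hn, Int.cast_zero, zero_div, add_zero]⟩
      · refine ⟨n, 1, fun i ↦ ?_⟩
        rw [← hn, Int.cast_one]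
        exact (sub_add_cancel (x i) (1 / 2)).symm
    refine ⟨n, m, ⟨k - 2 * m, ?_⟩, hnm⟩
    rw [ip_phi8_eq_of_forall_eq_add hnm] at hk
    have : ((∑ i, n i : ℤ) : ℂ) = ((k - 2 * m + (k - 2 * m) : ℤ) : ℂ) := by
      push_cast at hk ⊢
      linear_combination 2 * hk
    exact_mod_cast this
  · rintro ⟨n, m, ⟨k, hk⟩, hnm⟩
    refine ⟨?_, k + 2 * m, ?_⟩
    · obtain ⟨j, rfl | rfl⟩ := m.even_or_odd'
      · refine .inl fun i ↦ ⟨n i + j, ?_⟩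
        rw [hnm]
        push_cast
        ring
      · refine .inr fun i ↦ ⟨n i + j, ?_⟩
        rw [Pi.sub_apply, hnm, phi8]
        push_cast
        ring
    · rw [ip_phi8_eq_of_forall_eq_add hnm, hk]
      push_cast
      ring

/-- The set `E8lat` as a subgroup of `V8`, which makes Mathlib's closure lemmas available. -/
def E8Lattice : AddSubgroup V8 where
  carrier := E8lat
  zero_mem' := mem_E8lat_iff.mpr ⟨0, 0, by simp⟩
  add_mem' := by
    intro x y hx hy
    obtain ⟨n, m, hn, hx⟩ := mem_E8lat_iff.mp hx
    obtain ⟨n', m', hn', hy⟩ := mem_E8lat_iff.mp hy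
    refine mem_E8lat_iff.mpr ⟨n + n', m + m', ?_, fun i ↦ ?_⟩
    · simpa only [Pi.add_apply, sum_add_distrib] using hn.add hn'
    · rw [Pi.add_apply, hx, hy, Pi.add_apply]
      push_cast
      ring
  neg_mem' := by
    intro x hx
    obtain ⟨n, m, hn, hx⟩ := mem_E8lat_iff.mp hx
    refine mem_E8lat_iff.mpr ⟨-n, -m, ?_, fun i ↦ ?_⟩
    · simpa only [Pi.neg_apply, sum_neg_distrib] using hn.neg
    · rw [Pi.neg_apply, hx, Pi.neg_apply]
      push_cast
      ring

lemma intCast_mem_E8lat {n : Fin 8 → ℤ} (hn : Even (∑ i, n i)) :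
    (fun i ↦ (n i : ℂ)) ∈ E8lat :=
  mem_E8lat_iff.mpr ⟨n, 0, hn, fun i ↦ by simp⟩

lemma exists_eq_intCast_div_two {x : V8} (hx : x ∈ E8lat) :
    ∃ w : Fin 8 → ℤ, (∀ i, x i = w i / 2) ∧ 8 ∣ w ⬝ᵥ w := by
  obtain ⟨n, m, hn, hx⟩ := mem_E8lat_iff.mp hx
  obtain ⟨k, hk⟩ := (even_dotProduct_self_iff n).mpr hn
  obtain ⟨j, hj⟩ := hn
  refine ⟨fun i ↦ 2 * n i + m, fun i ↦ ?_, k + m * j + m ^ 2, ?_⟩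
  · rw [hx]
    push_cast
    ring
  · have hsq : ∀ i, (2 * n i + m) * (2 * n i + m) = 4 * (n i * n i) + 4 * m * n i + m ^ 2 :=
      fun i ↦ by ring
    rw [dotProduct] at hk ⊢
    simp only [hsq, sum_add_distrib, ← mul_sum, hk, hj, sum_const, card_univ, Fintype.card_fin,
      nsmul_eq_mul]
    push_cast
    ring

lemma exists_ip_self_eq_two_mul {x : V8} (hx : x ∈ E8lat) :
    ∃ n : ℕ, ip x x = 2 * n ∧ (n = 0 → x = 0) := by
  obtain ⟨w, hw, k, hk⟩ := exists_eq_intCast_div_two hx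
  have hw_nonneg : 0 ≤ w ⬝ᵥ w := sum_nonneg fun i _ ↦ mul_self_nonneg (w i)
  lift k to ℕ using by lia
  refine ⟨k, ?_, fun h ↦ funext fun i ↦ ?_⟩
  · rw [ip_self_of_forall_eq_div hw, hk]
    push_cast
    ring
  · have hw0 : w = 0 := dotProduct_self_eq_zero.mp (by rw [hk, h, Nat.cast_zero, mul_zero])
    rw [hw, hw0]
    simp only [Pi.zero_apply, Int.cast_zero, zero_div]

lemma exists_ip_eq_intCast {x y : V8} (hx : x ∈ E8lat) (hy : y ∈ E8lat) :
    ∃ k : ℤ, ip x y = k := by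
  obtain ⟨a, ha, -⟩ := exists_ip_self_eq_two_mul hx
  obtain ⟨b, hb, -⟩ := exists_ip_self_eq_two_mul hy
  obtain ⟨c, hc, -⟩ := exists_ip_self_eq_two_mul (E8Lattice.add_mem hx hy)
  refine ⟨c - a - b, ?_⟩
  push_cast
  linear_combination (hc - ha - hb - ip_add_self x y) / 2

/-- The vectors of norm `1` in `(1/2)P`, i.e. the halves of the norm `4` vectors of `P`. -/
def halfLatticeUnits : Set V8 := {a | (2 : ℂ) • a ∈ E8lat ∧ ip a a = 1}

-- `a - b` and `a + b` both lie in the even lattice `P` and their norms add up to `4`.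
lemma eq_or_eq_neg_or_ip_eq_zero {a b : V8} (ha : a ∈ halfLatticeUnits)
    (hb : b ∈ halfLatticeUnits) (hab : a - b ∈ E8lat) : a = b ∨ a = -b ∨ ip a b = 0 := by
  have hadd_mem : a + b ∈ E8lat := by
    have : a + b = a - b + (2 : ℂ) • b := by module
    exact this ▸ E8Lattice.add_mem hab hb.1
  have hsub : ip (a - b) (a - b) = 2 - 2 * ip a b := by
    rw [ip_sub_self, ha.2, hb.2]
    ring
  have hadd : ip (a + b) (a + b) = 2 + 2 * ip a b := by
    rw [ip_add_self, ha.2, hb.2]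
    ring
  obtain ⟨n, hn, hn0⟩ := exists_ip_self_eq_two_mul hab
  obtain ⟨m, hm, hm0⟩ := exists_ip_self_eq_two_mul hadd_mem
  have hnm : n + m = 2 := by
    have : ((n + m : ℕ) : ℂ) = (2 : ℕ) := by
      push_cast
      linear_combination (hsub + hadd - hn - hm) / 2
    exact_mod_cast this
  obtain rfl | rfl | rfl : n = 0 ∨ m = 0 ∨ n = 1 := by lia
  · exact .inl (sub_eq_zero.mp (hn0 rfl))
  · exact .inr (.inl (eq_neg_of_add_eq_zero_left (hm0 rfl)))
  · refine .inr (.inr ?_)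
    push_cast at hn
    linear_combination (hsub - hn) / 2

/-! ### Frames as congruence classes -/

namespace IsClFrame

variable {l : ℕ} {A B : Set V8} {a b : V8}

lemma subset_halfLatticeUnits (hA : IsClFrame l A) : A ⊆ halfLatticeUnits := by
  obtain ⟨f, rfl, hip, -, h2⟩ := hA
  have hf : ∀ i, f i ∈ halfLatticeUnits := fun i ↦ ⟨h2 i, by rw [hip, if_pos rfl]⟩
  rintro _ (⟨i, rfl⟩ | ⟨i, rfl⟩)
  · exact hf i
  · refine ⟨?_, ?_⟩
    · rw [smul_neg]
      exact E8Lattice.neg_mem (hf i).1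
    · rw [ip_eq_dotProduct, neg_dotProduct_neg]
      exact (hf i).2

lemma sub_mem (hA : IsClFrame l A) (ha : a ∈ A) (hb : b ∈ A) : a - b ∈ E8lat := by
  obtain ⟨f, rfl, -, hpm, h2⟩ := hA
  have hadd : ∀ i j, f i + f j ∈ E8lat := by
    intro i j
    obtain h | rfl | h := lt_trichotomy i j
    · exact (hpm i j h).1
    · exact two_smul ℂ (f i) ▸ h2 i
    · exact add_comm (f j) (f i) ▸ (hpm j i h).1
  have hsub : ∀ i j, f i - f j ∈ E8lat := by
    intro i j
    have : f i - f j = f i + f j - (2 : ℂ) • f j := by module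
    exact this ▸ E8Lattice.sub_mem (hadd i j) (h2 j)
  obtain ⟨i, rfl⟩ | ⟨i, rfl⟩ := ha <;> obtain ⟨j, rfl⟩ | ⟨j, rfl⟩ := hb
  · exact hsub i j
  · simpa only [sub_neg_eq_add] using hadd i j
  · have : -f i - f j = -(f i + f j) := by module
    exact this ▸ E8Lattice.neg_mem (hadd i j)
  · have : -f i - -f j = f j - f i := by module
    exact this ▸ hsub j i

lemma mem_iff (hA : IsClFrame 8 A) (ha : a ∈ A) :
    b ∈ A ↔ b ∈ halfLatticeUnits ∧ a - b ∈ E8lat := by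
  refine ⟨fun hb ↦ ⟨hA.subset_halfLatticeUnits hb, hA.sub_mem ha hb⟩, fun ⟨hb, hab⟩ ↦ ?_⟩
  by_contra hbA
  have hunits := hA.subset_halfLatticeUnits
  have hdiff : ∀ c ∈ A, c - b ∈ E8lat := fun c hc ↦
    sub_add_sub_cancel c a b ▸ E8Lattice.add_mem (hA.sub_mem hc ha) hab
  obtain ⟨f, rfl, hip, -, -⟩ := hA
  have horth : ∀ i, ip (f i) b = 0 := by
    intro i
    have hfi : f i ∈ Set.range f ∪ Set.range fun i ↦ -f i := .inl ⟨i, rfl⟩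
    obtain h | h | h := eq_or_eq_neg_or_ip_eq_zero (hunits hfi) hb (hdiff _ hfi)
    · exact absurd (.inl ⟨i, h⟩) hbA
    · exact absurd (.inr ⟨i, neg_eq_iff_eq_neg.mpr h⟩) hbA
    · exact h
  have hb0 : b = 0 := eq_zero_of_forall_dotProduct_orthonormal_eq_zero hip horth
  have hb1 := hb.2
  rw [hb0, ip_eq_dotProduct, zero_dotProduct] at hb1
  exact zero_ne_one hb1

lemma eq_of_mem (hA : IsClFrame 8 A) (hB : IsClFrame 8 B) (haA : a ∈ A) (haB : a ∈ B) :
    A = B :=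
  Set.ext fun _ ↦ (hA.mem_iff haA).trans (hB.mem_iff haB).symm

lemma ncard_eq (hA : IsClFrame l A) : A.ncard = 2 * l := by
  obtain ⟨f, rfl, hip, -, -⟩ := hA
  have hinj : Function.Injective f := fun i j hij ↦ by
    have h := hip i j
    rw [← hij, hip, if_pos rfl] at h
    by_contra hne
    rw [if_neg hne] at h
    exact one_ne_zero h
  have hinj_neg : Function.Injective fun i ↦ -f i := neg_injective.comp hinj
  have hdisj : Disjoint (Set.range f) (Set.range fun i ↦ -f i) := by
    rw [Set.disjoint_left]
    rintro _ ⟨i, rfl⟩ ⟨j, hj : -f j = f i⟩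
    have h : ip (f j) (f i) = -1 := by
      rw [← hj, ip_eq_dotProduct, dotProduct_neg, ← ip_eq_dotProduct, hip, if_pos rfl]
    rw [hip] at h
    split_ifs at h <;> norm_num at h
  rw [Set.ncard_union_eq hdisj (Set.finite_range _) (Set.finite_range _),
    Set.ncard_range_of_injective hinj, Set.ncard_range_of_injective hinj_neg,
    Nat.card_fin, two_mul]

lemma image (hA : IsClFrame l A) {g : V8 →ₗ[ℂ] V8} (hg : ∀ x y, ip (g x) (g y) = ip x y)
    (hgE : Set.MapsTo g E8lat E8lat) : IsClFrame l (g '' A) := by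
  obtain ⟨f, rfl, hip, hpm, h2⟩ := hA
  refine ⟨g ∘ f, ?_, fun i j ↦ (hg _ _).trans (hip i j), fun i j hij ↦ ⟨?_, ?_⟩, fun i ↦ ?_⟩
  · simp only [Set.image_union, ← Set.range_comp, Function.comp_def, map_neg]
  · exact map_add g (f i) (f j) ▸ hgE (hpm i j hij).1
  · exact map_sub g (f i) (f j) ▸ hgE (hpm i j hij).2
  · exact map_smul g (2 : ℂ) (f i) ▸ hgE (h2 i)

end IsClFrame

/-! ### Root reflections -/

/-- The reflection `x ↦ x - ⟨α,x⟩α` in a root `α`. -/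
def rootReflection {α : V8} (hα : ip α α = 2) : V8 ≃ₗ[ℂ] V8 :=
  Module.reflection (f := dotProductBilin ℂ ℂ α) hα

lemma rootReflection_apply {α : V8} (hα : ip α α = 2) (x : V8) :
    rootReflection hα x = x - ip α x • α :=
  Module.reflection_apply x hα

lemma rootReflection_rootReflection {α : V8} (hα : ip α α = 2) (x : V8) :
    rootReflection hα (rootReflection hα x) = x :=
  Module.involutive_reflection hα x

lemma ip_rootReflection {α : V8} (hα : ip α α = 2) (x y : V8) :
    ip (rootReflection hα x) (rootReflection hα y) = ip x y := by
  have hα' : α ⬝ᵥ α = 2 := hα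
  rw [rootReflection_apply, rootReflection_apply]
  simp only [ip_eq_dotProduct, sub_dotProduct, dotProduct_sub, smul_dotProduct, dotProduct_smul,
    smul_eq_mul, dotProduct_comm x α]
  linear_combination (α ⬝ᵥ x) * (α ⬝ᵥ y) * hα'

lemma mapsTo_rootReflection_E8lat {α : V8} (hα : ip α α = 2) (hmem : α ∈ E8lat) :
    Set.MapsTo (rootReflection hα) E8lat E8lat := by
  intro x hx
  obtain ⟨k, hk⟩ := exists_ip_eq_intCast hmem hx
  rw [rootReflection_apply, hk, Int.cast_smul_eq_zsmul]
  exact E8Lattice.sub_mem hx (E8Lattice.zsmul_mem hmem k)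

lemma rootReflection_mem_halfLatticeUnits {α a : V8} (hα : ip α α = 2) (hmem : α ∈ E8lat)
    (ha : a ∈ halfLatticeUnits) : rootReflection hα a ∈ halfLatticeUnits :=
  ⟨map_smul (rootReflection hα) (2 : ℂ) a ▸ mapsTo_rootReflection_E8lat hα hmem ha.1,
    (ip_rootReflection hα a a).trans ha.2⟩

lemma exists_isClFrame_of_rootReflection {l : ℕ} {α a : V8} (hα : ip α α = 2) (hmem : α ∈ E8lat)
    (h : ∃ A, IsClFrame l A ∧ rootReflection hα a ∈ A) : ∃ A, IsClFrame l A ∧ a ∈ A := by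
  obtain ⟨A, hA, haA⟩ := h
  exact ⟨_, hA.image (g := (rootReflection hα).toLinearMap) (ip_rootReflection hα)
    (mapsTo_rootReflection_E8lat hα hmem), _, haA, rootReflection_rootReflection hα a⟩

lemma single_add_single_mem_E8lat (i j : Fin 8) :
    (Pi.single i 1 + Pi.single j 1 : V8) ∈ E8lat := by
  refine mem_E8lat_iff.mpr ⟨Pi.single i 1 + Pi.single j 1, 0, ⟨1, ?_⟩, fun k ↦ ?_⟩
  · simp only [Pi.add_apply, sum_add_distrib, sum_pi_single', mem_univ, if_true]
  · simp [Pi.single_apply]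

lemma two_smul_single_mem_E8lat (i : Fin 8) : (2 : ℂ) • (Pi.single i 1 : V8) ∈ E8lat :=
  two_smul ℂ (Pi.single i 1 : V8) ▸ single_add_single_mem_E8lat i i

lemma isClFrame_standard : IsClFrame 8
    (Set.range (fun i ↦ (Pi.single i 1 : V8)) ∪ Set.range fun i ↦ -(Pi.single i 1 : V8)) := by
  refine ⟨fun i ↦ Pi.single i 1, rfl, fun i j ↦ ?_, fun i j _ ↦
    ⟨single_add_single_mem_E8lat i j, ?_⟩, two_smul_single_mem_E8lat⟩
  · simp only [ip_eq_dotProduct, single_one_dotProduct, Pi.single_apply]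
  · have : (Pi.single i 1 - Pi.single j 1 : V8) =
        Pi.single i 1 + Pi.single j 1 - (2 : ℂ) • Pi.single j 1 := by module
    exact this ▸ E8Lattice.sub_mem (single_add_single_mem_E8lat i j) (two_smul_single_mem_E8lat j)

/-- The vector `(±1/2, …, ±1/2)` with prescribed signs; it is a root of `E₈` when the signs add up
to a multiple of `4`. -/
def signRoot (e : Fin 8 → ℤˣ) : V8 := fun i ↦ (e i : ℂ) / 2

lemma intUnits_cast_mul_self (u : ℤˣ) : ((u : ℤ) : ℂ) * ((u : ℤ) : ℂ) = 1 := by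
  rw [← Int.cast_mul, ← Units.val_mul, Int.units_mul_self, Units.val_one, Int.cast_one]

lemma ip_signRoot_self (e : Fin 8 → ℤˣ) : ip (signRoot e) (signRoot e) = 2 := by
  have hsq : ∀ i, signRoot e i * signRoot e i = 1 / 4 := fun i ↦ by
    rw [signRoot]
    linear_combination intUnits_cast_mul_self (e i) / 4
  simp only [ip, hsq, sum_const, card_univ, Fintype.card_fin, nsmul_eq_mul]
  norm_num

lemma signRoot_mem_E8lat {e : Fin 8 → ℤˣ} (he : 4 ∣ ∑ i, (e i : ℤ)) : signRoot e ∈ E8lat := by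
  have hodd : ∀ i, ∃ n : ℤ, (e i : ℤ) = 2 * n + 1 := fun i ↦ by
    obtain h | h := Int.units_eq_one_or (e i)
    · exact ⟨0, by rw [h]; rfl⟩
    · exact ⟨-1, by rw [h]; rfl⟩
  choose n hn using hodd
  refine mem_E8lat_iff.mpr ⟨n, 1, ?_, fun i ↦ ?_⟩
  · simp only [hn, sum_add_distrib, ← mul_sum, sum_const, card_univ, Fintype.card_fin,
      nsmul_eq_mul] at he
    rw [even_iff_two_dvd]
    lia
  · rw [signRoot, hn]
    push_cast
    ring

/-- The vector of shape `(±3/4, (±1/4)^7)` that is the reflection of `-e i` times the `i`-th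
coordinate vector in the root `signRoot e`. -/
def oddUnit (i : Fin 8) (e : Fin 8 → ℤˣ) : V8 :=
  (1 / 2 : ℂ) • signRoot e - (e i : ℂ) • Pi.single i 1

lemma ip_signRoot_oddUnit (i : Fin 8) (e : Fin 8 → ℤˣ) : ip (signRoot e) (oddUnit i e) = 1 / 2 := by
  rw [oddUnit, ip_eq_dotProduct, dotProduct_sub, dotProduct_smul, dotProduct_smul,
    dotProduct_single_one, ← ip_eq_dotProduct, ip_signRoot_self, signRoot, smul_eq_mul, smul_eq_mul]
  linear_combination -intUnits_cast_mul_self (e i) / 2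

lemma rootReflection_oddUnit (i : Fin 8) (e : Fin 8 → ℤˣ) :
    rootReflection (ip_signRoot_self e) (oddUnit i e) = -((e i : ℂ) • Pi.single i 1) := by
  rw [rootReflection_apply, ip_signRoot_oddUnit, oddUnit]
  module

lemma oddUnit_mem_halfLatticeUnits (i : Fin 8) {e : Fin 8 → ℤˣ} (he : 4 ∣ ∑ k, (e k : ℤ)) :
    oddUnit i e ∈ halfLatticeUnits := by
  constructor
  · have : (2 : ℂ) • oddUnit i e = signRoot e - (e i : ℤ) • ((2 : ℂ) • Pi.single i 1) := by
      rw [oddUnit, ← Int.cast_smul_eq_zsmul ℂ]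
      module
    exact this ▸ E8Lattice.sub_mem (signRoot_mem_E8lat he)
      (E8Lattice.zsmul_mem (two_smul_single_mem_E8lat i) _)
  · rw [← ip_rootReflection (ip_signRoot_self e), rootReflection_oddUnit, ip_eq_dotProduct,
      neg_dotProduct_neg, smul_dotProduct, dotProduct_smul, single_dotProduct, Pi.single_eq_same,
      smul_eq_mul, smul_eq_mul, one_mul, mul_one, intUnits_cast_mul_self]

lemma exists_isClFrame_oddUnit_mem (i : Fin 8) {e : Fin 8 → ℤˣ} (he : 4 ∣ ∑ k, (e k : ℤ)) :
    ∃ A, IsClFrame 8 A ∧ oddUnit i e ∈ A := by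
  refine exists_isClFrame_of_rootReflection (ip_signRoot_self e) (signRoot_mem_E8lat he)
    ⟨_, isClFrame_standard, ?_⟩
  rw [rootReflection_oddUnit]
  obtain h | h := Int.units_eq_one_or (e i)
  · exact .inr ⟨i, by simp [h]⟩
  · exact .inl ⟨i, by simp [h]⟩

/-! ### The unit vectors of `(1/2)P` and the number of frames -/

/-- The vector `u / 2` of `V8`, for an integer vector `u`. -/
def halfInt (u : Fin 8 → ℤ) : V8 := fun i ↦ (u i : ℂ) / 2

lemma halfInt_mem_halfLatticeUnits {u : Fin 8 → ℤ} (hu : u ⬝ᵥ u = 4) :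
    halfInt u ∈ halfLatticeUnits := by
  constructor
  · have heven : Even (∑ i, u i) := (even_dotProduct_self_iff u).mp (hu ▸ by decide)
    have : (2 : ℂ) • halfInt u = fun i ↦ (u i : ℂ) := by
      ext i
      rw [Pi.smul_apply, halfInt, smul_eq_mul, mul_div_cancel₀ _ two_ne_zero]
    exact this ▸ intCast_mem_E8lat heven
  · rw [ip_self_of_forall_eq_div (x := halfInt u) fun _ ↦ rfl, hu]
    norm_num

lemma oddUnit_apply (i : Fin 8) (e : Fin 8 → ℤˣ) (k : Fin 8) :
    oddUnit i e k = ((e k * (1 - 4 * (Pi.single i 1 : Fin 8 → ℤ) k) : ℤ) : ℂ) / 4 := by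
  rw [oddUnit, Pi.sub_apply, Pi.smul_apply, Pi.smul_apply, signRoot]
  obtain rfl | hk := eq_or_ne k i
  · simp only [Pi.single_eq_same, smul_eq_mul]
    push_cast
    ring
  · simp only [Pi.single_eq_of_ne hk, smul_eq_mul]
    push_cast
    ring

lemma exists_eq_intCast_div_four {a : V8} (ha : a ∈ halfLatticeUnits) :
    ∃ (n : Fin 8 → ℤ) (m : ℤ), Even (∑ i, n i) ∧ (∀ i, a i = ((2 * n i + m : ℤ) : ℂ) / 4) ∧
      (fun i ↦ 2 * n i + m) ⬝ᵥ (fun i ↦ 2 * n i + m) = 16 := by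
  obtain ⟨n, m, hn, hnm⟩ := mem_E8lat_iff.mp ha.1
  have hcoord : ∀ i, a i = ((2 * n i + m : ℤ) : ℂ) / 4 := fun i ↦ by
    have := hnm i
    rw [Pi.smul_apply, smul_eq_mul] at this
    push_cast
    linear_combination this / 2
  refine ⟨n, m, hn, hcoord, ?_⟩
  have hip := ip_self_of_forall_eq_div (w := fun i ↦ 2 * n i + m) hcoord
  rw [ha.2, eq_div_iff (by norm_num)] at hip
  norm_num at hip
  exact_mod_cast hip.symm

lemma eq_halfInt_or_eq_oddUnit {a : V8} (ha : a ∈ halfLatticeUnits) :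
    (∃ u, u ⬝ᵥ u = 4 ∧ halfInt u = a) ∨
      ∃ i e, 4 ∣ ∑ k, (e k : ℤ) ∧ oddUnit i e = a := by
  obtain ⟨n, m, hn, ha_coord, hx⟩ := exists_eq_intCast_div_four ha
  obtain ⟨j, rfl | rfl⟩ := m.even_or_odd'
  · refine .inl ⟨fun i ↦ n i + j, ?_, ?_⟩
    · have hsq : ∀ i, (2 * n i + 2 * j) * (2 * n i + 2 * j) = 4 * ((n i + j) * (n i + j)) :=
        fun i ↦ by ring
      simp only [dotProduct, hsq, ← mul_sum] at hx ⊢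
      lia
    · ext i
      rw [ha_coord, halfInt]
      push_cast
      ring
  · obtain ⟨i, e, he⟩ := exists_signs_of_odd_of_dotProduct_self
      (x := fun k ↦ 2 * n k + (2 * j + 1)) (fun k ↦ ⟨n k + j, by ring⟩) hx
    refine .inr ⟨i, e, ?_, funext fun k ↦ by rw [ha_coord, he, oddUnit_apply]⟩
    obtain ⟨r, hr⟩ := hn
    have hsum : ∑ k, (2 * n k + (2 * j + 1)) = ∑ k, (e k : ℤ) - 4 * e i := by
      simp only [he, mul_sub, mul_one, sum_sub_distrib, mul_left_comm _ (4 : ℤ), ← mul_sum]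
      simp only [Pi.single_apply, mul_ite, mul_one, mul_zero, sum_ite_eq', mem_univ, if_true]
    simp only [sum_add_distrib, ← mul_sum, hr, sum_const, card_univ, Fintype.card_fin,
      nsmul_eq_mul] at hsum
    push_cast at hsum
    lia

lemma halfInt_ne_oddUnit (u : Fin 8 → ℤ) (i : Fin 8) (e : Fin 8 → ℤˣ) :
    halfInt u ≠ oddUnit i e := by
  intro h
  have hi := congrFun h i
  rw [oddUnit_apply, halfInt, Pi.single_eq_same] at hi
  have : 2 * u i = e i * (1 - 4 * 1) := by
    have : ((2 * u i : ℤ) : ℂ) = ((e i * (1 - 4 * 1) : ℤ) : ℂ) := by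
      push_cast at hi ⊢
      linear_combination 4 * hi
    exact_mod_cast this
  obtain h | h := Int.units_eq_one_or (e i) <;> rw [h] at this <;> norm_num at this <;> lia

lemma halfInt_injective : Function.Injective halfInt := by
  intro u v huv
  ext i
  have := congrFun huv i
  rw [halfInt, halfInt, div_left_inj' two_ne_zero] at this
  exact_mod_cast this

lemma oddUnit_uncurry_injective : Function.Injective (Function.uncurry oddUnit) := by
  rintro ⟨i, e⟩ ⟨j, e'⟩ (h : oddUnit i e = oddUnit j e')
  have hcoord : ∀ k, (e k : ℤ) * (1 - 4 * (Pi.single i 1 : Fin 8 → ℤ) k) =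
      e' k * (1 - 4 * (Pi.single j 1 : Fin 8 → ℤ) k) := fun k ↦ by
    have := congrFun h k
    rw [oddUnit_apply, oddUnit_apply, div_left_inj' (by norm_num : (4 : ℂ) ≠ 0)] at this
    exact_mod_cast this
  have he : e = e' := funext fun k ↦ by
    have := hcoord k
    obtain h | h := Int.units_eq_one_or (e k) <;> obtain h' | h' := Int.units_eq_one_or (e' k) <;>
      rw [h, h'] at this ⊢ <;> push_cast at this <;> lia
  subst he
  have hi := mul_left_cancel₀ (e i).ne_zero (hcoord i)
  refine Prod.ext (by_contra fun hne : i ≠ j ↦ ?_) rfl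
  rw [Pi.single_eq_same, Pi.single_eq_of_ne hne] at hi
  norm_num at hi

lemma ncard_image_oddUnit :
    (Function.uncurry oddUnit '' {p | 4 ∣ ∑ k, (p.2 k : ℤ)}).ncard = 1024 := by
  have hset : {p : Fin 8 × (Fin 8 → ℤˣ) | 4 ∣ ∑ k, (p.2 k : ℤ)} =
      ↑((univ : Finset (Fin 8)) ×ˢ ({e | 4 ∣ ∑ k, (e k : ℤ)} : Finset (Fin 8 → ℤˣ))) := by
    ext p
    simp only [Set.mem_ofPred_eq, mem_coe, mem_product, mem_univ, mem_filter, true_and]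
  have hsigns : #{e : Fin 8 → ℤˣ | 4 ∣ ∑ k, (e k : ℤ)} = 128 := by decide +kernel
  rw [Set.ncard_image_of_injective _ oddUnit_uncurry_injective, hset, Set.ncard_coe_finset,
    card_product, card_univ, Fintype.card_fin, hsigns]

lemma ncard_halfLatticeUnits : halfLatticeUnits.ncard = 2160 := by
  have hunion : halfLatticeUnits = halfInt '' {u | u ⬝ᵥ u = 4} ∪
      Function.uncurry oddUnit '' {p | 4 ∣ ∑ k, (p.2 k : ℤ)} := by
    ext a
    constructor
    · intro ha
      obtain h | ⟨i, e, he, rfl⟩ := eq_halfInt_or_eq_oddUnit ha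
      · exact .inl h
      · exact .inr ⟨(i, e), he, rfl⟩
    · rintro (⟨u, hu, rfl⟩ | ⟨⟨i, e⟩, he, rfl⟩)
      · exact halfInt_mem_halfLatticeUnits hu
      · exact oddUnit_mem_halfLatticeUnits i he
  have hhalfInt : (halfInt '' {u | u ⬝ᵥ u = 4}).ncard = 1136 := by
    rw [Set.ncard_image_of_injective _ halfInt_injective, ncard_dotProduct_self_eq_four,
      Fintype.card_fin]
    rfl
  have hdisj : Disjoint (halfInt '' {u | u ⬝ᵥ u = 4})
      (Function.uncurry oddUnit '' {p | 4 ∣ ∑ k, (p.2 k : ℤ)}) := by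
    rw [Set.disjoint_left]
    rintro _ ⟨u, -, rfl⟩ ⟨⟨i, e⟩, -, h⟩
    exact halfInt_ne_oddUnit u i e h.symm
  rw [hunion, Set.ncard_union_eq hdisj
    (Set.finite_of_ncard_ne_zero (by rw [hhalfInt]; norm_num))
    (Set.finite_of_ncard_ne_zero (by rw [ncard_image_oddUnit]; norm_num)), hhalfInt,
    ncard_image_oddUnit]

lemma ip_signRoot_halfInt (e : Fin 8 → ℤˣ) (u : Fin 8 → ℤ) :
    ip (signRoot e) (halfInt u) = ((∑ i, (e i : ℤ) * u i : ℤ) : ℂ) / 4 := by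
  simp only [ip, signRoot, halfInt, Int.cast_sum, Int.cast_mul, sum_div]
  exact sum_congr rfl fun i _ ↦ by ring

lemma exists_isClFrame_halfInt_mem {u : Fin 8 → ℤ} (hu : u ⬝ᵥ u = 4) :
    ∃ A, IsClFrame 8 A ∧ halfInt u ∈ A := by
  obtain ⟨e, he, heu⟩ := exists_signs_sum_mul_eq_two (by decide) (by decide) hu
  have hα := ip_signRoot_self e
  have hmem := signRoot_mem_E8lat he
  refine exists_isClFrame_of_rootReflection hα hmem ?_
  obtain ⟨v, -, hv⟩ | ⟨i, e', he', hv⟩ := eq_halfInt_or_eq_oddUnit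
    (rootReflection_mem_halfLatticeUnits hα hmem (halfInt_mem_halfLatticeUnits hu))
  · -- The reflection is `u / 2 - e / 4`, whose coordinates are not in `(1/2)ℤ`.
    exfalso
    have h0 := congrFun hv 0
    rw [rootReflection_apply, ip_signRoot_halfInt, heu, Pi.sub_apply, Pi.smul_apply, signRoot,
      halfInt, halfInt, smul_eq_mul] at h0
    have : 2 * v 0 = 2 * u 0 - e 0 := by
      have : ((2 * v 0 : ℤ) : ℂ) = ((2 * u 0 - e 0 : ℤ) : ℂ) := by
        push_cast at h0 ⊢
        linear_combination 4 * h0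
      exact_mod_cast this
    obtain h | h := Int.units_eq_one_or (e 0) <;> rw [h] at this <;> push_cast at this <;> lia
  · exact hv ▸ exists_isClFrame_oddUnit_mem i he'

lemma exists_isClFrame_mem {a : V8} (ha : a ∈ halfLatticeUnits) :
    ∃ A, IsClFrame 8 A ∧ a ∈ A := by
  obtain ⟨u, hu, rfl⟩ | ⟨i, e, he, rfl⟩ := eq_halfInt_or_eq_oddUnit ha
  · exact exists_isClFrame_halfInt_mem hu
  · exact exists_isClFrame_oddUnit_mem i he

lemma sUnion_isClFrame_eq_halfLatticeUnits : ⋃₀ {A | IsClFrame 8 A} = halfLatticeUnits :=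
  Set.Subset.antisymm (Set.sUnion_subset fun _ hA ↦ IsClFrame.subset_halfLatticeUnits hA)
    fun _ ha ↦ exists_isClFrame_mem ha

lemma pairwise_disjoint_isClFrame : {A | IsClFrame 8 A}.Pairwise Disjoint :=
  fun _ hA _ hB hne ↦ Set.disjoint_left.mpr fun _ haA haB ↦
    hne (IsClFrame.eq_of_mem hA hB haA haB)

lemma ncard_isClFrame : {A | IsClFrame 8 A}.ncard = 135 := by
  have hfin : (⋃₀ {A | IsClFrame 8 A}).Finite := Set.finite_of_ncard_ne_zero (by
    rw [sUnion_isClFrame_eq_halfLatticeUnits, ncard_halfLatticeUnits]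
    norm_num)
  have hcount := ncard_sUnion_of_forall_ncard_eq (F := {A | IsClFrame 8 A})
    (fun _ hA ↦ IsClFrame.ncard_eq hA) pairwise_disjoint_isClFrame hfin
  rw [sUnion_isClFrame_eq_halfLatticeUnits, ncard_halfLatticeUnits] at hcount
  lia

/-- Proposition 1.2: (1) every `a ∈ (1/2)P` with `⟨a,a⟩ = 1` lies in a unique `C₈`-frame;
(2) the set `{a ∈ (1/2)P : ⟨a,a⟩ = 1}` is the disjoint union of all `C₈`-frames;
(3) there are exactly `135` `C₈`-frames. -/
theorem statement0 :
    (∀ a : V8, (2 : ℂ) • a ∈ E8lat → ip a a = 1 →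
      ∃! A : Set V8, IsClFrame 8 A ∧ a ∈ A) ∧
    (⋃₀ {A : Set V8 | IsClFrame 8 A} = {a : V8 | (2 : ℂ) • a ∈ E8lat ∧ ip a a = 1}) ∧
    ({A : Set V8 | IsClFrame 8 A}.Pairwise fun A B => Disjoint A B) ∧
    {A : Set V8 | IsClFrame 8 A}.ncard = 135 := by
  refine ⟨fun a ha ha1 ↦ ?_, sUnion_isClFrame_eq_halfLatticeUnits, pairwise_disjoint_isClFrame,
    ncard_isClFrame⟩
  obtain ⟨A, hA, haA⟩ := exists_isClFrame_mem ⟨ha, ha1⟩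
  exact ⟨A, ⟨hA, haA⟩, fun _ hB ↦ hB.1.eq_of_mem hA hB.2 haA⟩
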